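/- arXiv:1104.5690 — 2 statements merged into one kernel-verified Lean document; each statement's English description precedes it below -/
import Mathlib

section
/- In B_6, define α_n = σ_3^n σ_2 σ_3 σ_4 σ_5 σ_1 σ_2 σ_3 σ_4 σ_1^n for each natural number n. Then: (i) each α_n is positive and palindromic-free; (ii) α_n is ε-twisted conjugated to α_0 for every n (indeed σ_5^n σ_3^n (σ_2σ_3σ_4σ_5σ_1σ_2σ_3σ_4) σ_1^n σ_5^n = (σ_1σ_3)^n (σ_2σ_3σ_4σ_5σ_1σ_2σ_3σ_4) (σ_3σ_1)^n); and (iii) the map n ↦ α_n is injective, so {α_n : n ∈ ℕ} is an infinite family of pairwise ε-twisted conjugated positive palindromic-free braids. -/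
/-!
Write `core = σ₂σ₃σ₄σ₅σ₁σ₂σ₃σ₄`. It passes two strands across four, so it satisfies
`core σᵢ = σᵢ₊₂ core` for `i = 1, 3` and `core σ₅ = σ₁ core` (`core_semiconj`). Hence
`α k = core σ₁ ^ (2k) = σ₃ ^ (2k) core`, and the displayed identity follows because `σ₁, σ₃, σ₅`
commute. Reading the identity as `α k = rev c * α 0 * c` with `c = (σ₃σ₁)^k σ₅^(-k)` gives the
twisted conjugacy, and the exponent sum `8 + 2k` of `α k` gives injectivity.

For palindromic-freeness it is enough that, for each `i`, `σᵢ` fails to divide `α k` in the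
positive monoid on at least one side: on the left for `i = 1, 4, 5`, on the right for `i = 2, 3`.
The obstruction comes from the Burau representation at `t = 2`. It is defined over `ℚ`, positive
braids act on vectors by integer matrices, and modulo `2` the matrix of `σᵢ` makes the coordinates
`i` and `i + 1` equal. So if `σᵢ⁻¹ x` is positive, `x` sends every integral vector to one whose
coordinates `i` and `i + 1` have the same parity (`parity`). The power of `σ₁` (or of `σ₃`, after
reversing) in `α k` disappears when the test vector is fixed by it, so that only the action of
`core` on one basis vector remains to be computed. Two versions of the representation, exchanged
by the symmetry `σᵢ ↦ σ₆₋ᵢ`, are needed; they are the values `u = 0` and `u = 1` of one formula.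
-/

def braidRels (m : ℕ) : Set (FreeGroup (Fin m)) :=
  { r | (∃ i j : Fin m, (i : ℕ) + 1 < (j : ℕ) ∧
          r = FreeGroup.of i * FreeGroup.of j * (FreeGroup.of i)⁻¹ * (FreeGroup.of j)⁻¹) ∨
        (∃ i j : Fin m, (i : ℕ) + 1 = (j : ℕ) ∧
          r = FreeGroup.of i * FreeGroup.of j * FreeGroup.of i *
              (FreeGroup.of j)⁻¹ * (FreeGroup.of i)⁻¹ * (FreeGroup.of j)⁻¹) }

/-- The braid group on `n` strands. -/
abbrev B (n : ℕ) := PresentedGroup (braidRels (n - 1))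

/-- The Artin generators. -/
def σ {n : ℕ} (i : Fin (n - 1)) : B n := PresentedGroup.of i

/-- Evaluation of a signed word in the generators. -/
def π {n : ℕ} (w : List (Fin (n - 1) × Bool)) : B n :=
  (w.map (fun p => if p.2 then σ p.1 else (σ p.1)⁻¹)).prod

/-- The submonoid of positive braids. -/
def P (n : ℕ) : Submonoid (B n) := Submonoid.closure (Set.range (σ (n := n)))

def σ' {n : ℕ} (j : ℕ) : B n := if h : j < n - 1 then σ ⟨j, h⟩ else 1

/-- The Garside half-twist element Δ. -/
def Δ (n : ℕ) : B n :=
  ((List.range (n - 1)).map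
    (fun k => (((List.range (k + 1)).reverse).map (σ' (n := n))).prod)).prod

/-- Simple elements: positive prefixes of Δ. -/
def Simple {n : ℕ} (s : B n) : Prop := s ∈ P n ∧ s⁻¹ * Δ n ∈ P n

/-- Palindromic-free positive braids. -/
def PalFree {n : ℕ} (x : B n) : Prop :=
  ∀ i : Fin (n - 1), (σ i)⁻¹ * x * (σ i)⁻¹ ∉ P n

/-- Canonical length at most `m`. -/
def lenLE {n : ℕ} (x : B n) (m : ℕ) : Prop :=
  ∃ p : ℤ, (Δ n) ^ (-p) * x ∈ P n ∧ x⁻¹ * (Δ n) ^ (p + (m : ℤ)) ∈ P n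

/-- Canonical length exactly `m`. -/
def lenEQ {n : ℕ} (x : B n) (m : ℕ) : Prop :=
  lenLE x m ∧ (1 ≤ m → ¬ lenLE x (m - 1))

/-- Left normal form (as a list of simple factors). -/
def IsLeftNF {n : ℕ} (x : B n) (L : List (B n)) : Prop :=
  (∀ s ∈ L, Simple s ∧ s ≠ 1) ∧ L.prod = x ∧
  ∀ i : ℕ, i + 1 < L.length → ∀ u : B n, Simple u →
    u⁻¹ * (L.getD i 1 * L.getD (i + 1) 1) ∈ P n → u⁻¹ * L.getD i 1 ∈ P n

/-- Right normal form (as a list of simple factors). -/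
def IsRightNF {n : ℕ} (x : B n) (L : List (B n)) : Prop :=
  (∀ s ∈ L, Simple s ∧ s ≠ 1) ∧ L.prod = x ∧
  ∀ i : ℕ, i + 1 < L.length → ∀ u : B n, Simple u →
    (L.getD i 1 * L.getD (i + 1) 1) * u⁻¹ ∈ P n → L.getD (i + 1) 1 * u⁻¹ ∈ P n

/-! ### Relations in the braid group -/

lemma sigma_comm (i j : Fin (6 - 1)) (h : (i : ℕ) + 1 < j) :
    (σ i : B 6) * σ j = σ j * σ i := by
  have h1 : (PresentedGroup.mk (braidRels (6 - 1)))
      (FreeGroup.of i * FreeGroup.of j * (FreeGroup.of i)⁻¹ * (FreeGroup.of j)⁻¹) = 1 :=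
    PresentedGroup.one_of_mem (Or.inl ⟨i, j, h, rfl⟩)
  simp only [map_mul, map_inv] at h1
  exact mul_inv_eq_iff_eq_mul.mp (mul_inv_eq_one.mp h1)

lemma sigma_braid (i j : Fin (6 - 1)) (h : (i : ℕ) + 1 = j) :
    (σ i : B 6) * σ j * σ i = σ j * σ i * σ j := by
  have h1 : (PresentedGroup.mk (braidRels (6 - 1)))
      (FreeGroup.of i * FreeGroup.of j * FreeGroup.of i *
        (FreeGroup.of j)⁻¹ * (FreeGroup.of i)⁻¹ * (FreeGroup.of j)⁻¹) = 1 :=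
    PresentedGroup.one_of_mem (Or.inr ⟨i, j, h, rfl⟩)
  simp only [map_mul, map_inv] at h1
  exact mul_inv_eq_iff_eq_mul.mp (mul_inv_eq_iff_eq_mul.mp (mul_inv_eq_one.mp h1))

/-- For `a, …, e` satisfying the braid relations, conjugation by `core` sends `a, c, e` to
`c, e, a`. Here `core` is the product of `b * c * d * e` and `a * b * c * d`, each of which shifts
generators by one; the last relation holds because `a * b * c * d * e` also does. -/
lemma core_semiconj {G : Type*} [Group G] {a b c d e : G}
    (hab : a * b * a = b * a * b) (hbc : b * c * b = c * b * c) (hcd : c * d * c = d * c * d)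
    (hde : d * e * d = e * d * e) (hac : Commute a c) (had : Commute a d) (hae : Commute a e)
    (hbd : Commute b d) (hbe : Commute b e) (hce : Commute c e) :
    SemiconjBy (b * c * d * e * a * b * c * d) a c ∧
    SemiconjBy (b * c * d * e * a * b * c * d) c e ∧
    SemiconjBy (b * c * d * e * a * b * c * d) e a := by
  have br : ∀ {x y : G}, x * y * x = y * x * y → SemiconjBy (x * y) x y := by
    intro x y h
    simpa only [SemiconjBy, mul_assoc] using h
  have sab := br hab
  have sbc := br hbc
  have scd := br hcd
  have sde := br hde
  have cm : ∀ {x y : G}, Commute x y → SemiconjBy x y y := fun h => h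
  have hB0 : SemiconjBy (a * b * c * d) a b :=
    (sab.mul_left (cm hac.symm)).mul_left (cm had.symm)
  have hB2 : SemiconjBy (a * b * c * d) c d := by
    have := (cm had).mul_left ((cm hbd).mul_left scd)
    simpa only [mul_assoc] using this
  have hA1 : SemiconjBy (b * c * d * e) b c :=
    (sbc.mul_left (cm hbd.symm)).mul_left (cm hbe.symm)
  have hA3 : SemiconjBy (b * c * d * e) d e := by
    have := (cm hbe).mul_left ((cm hce).mul_left sde)
    simpa only [mul_assoc] using this
  have X0 : SemiconjBy (a * b * c * d * e) a b := hB0.mul_left (cm hae.symm)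
  have X1 : SemiconjBy (a * b * c * d * e) b c := by
    have := (cm hac).mul_left hA1
    simpa only [mul_assoc] using this
  have X2 : SemiconjBy (a * b * c * d * e) c d := hB2.mul_left (cm hce.symm)
  have X3 : SemiconjBy (a * b * c * d * e) d e := by
    have := (cm hae).mul_left hA3
    simpa only [mul_assoc] using this
  have X := ((X0.mul_right X1).mul_right X2).mul_right X3
  refine ⟨?_, ?_, ?_⟩
  · simpa only [mul_assoc] using hA1.mul_left hB0
  · simpa only [mul_assoc] using hA3.mul_left hB2
  · simpa only [SemiconjBy, mul_assoc] using X.symm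

/-! ### The Burau representation at `t = 2` -/

/-- The Burau operator of the generator `i` at `t = 2`, acting on the coordinates `i` and `i + 1`
by the matrix `(-1, 2; 1, 0)` for `u = 0`, and by its mirror image `(0, 1; 2, -1)` for `u = 1`.
Vectors are indexed by `ℕ`, which leaves the coordinates from `6` on untouched. -/
def burauFun (u : ℚ) (i : ℕ) (v : ℕ → ℚ) : ℕ → ℚ := fun j =>
  if j = i then (u - 1) * v i + (2 - u) * v (i + 1)
  else if j = i + 1 then (1 + u) * v i - u * v (i + 1)
  else v j

/-- The operator `burauFun u i` as a permutation of the vectors. Its determinant is `-2` for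
every `u`. -/
def burauPerm (u : ℚ) (i : ℕ) : Equiv.Perm (ℕ → ℚ) where
  toFun := burauFun u i
  invFun v := fun j =>
    if j = i then (u * v i + (2 - u) * v (i + 1)) / 2
    else if j = i + 1 then ((1 + u) * v i - (u - 1) * v (i + 1)) / 2
    else v j
  left_inv v := by
    funext j
    by_cases h1 : j = i
    · subst h1; simp [burauFun]; ring
    · by_cases h2 : j = i + 1
      · subst h2; simp [burauFun]; ring
      · simp [burauFun, h1, h2]
  right_inv v := by
    funext j
    by_cases h1 : j = i
    · subst h1; simp [burauFun]; ring
    · by_cases h2 : j = i + 1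
      · subst h2; simp [burauFun]; ring
      · simp [burauFun, h1, h2]

lemma burauFun_comm (u : ℚ) (i j : ℕ) (h : i + 1 < j) (v : ℕ → ℚ) :
    burauFun u i (burauFun u j v) = burauFun u j (burauFun u i v) := by
  funext l
  have e1 : i ≠ j := by omega
  have e2 : i ≠ j + 1 := by omega
  have e3 : i + 1 ≠ j := by omega
  by_cases h1 : l = i
  · subst h1; simp [burauFun, e1, e2, e3]
  · by_cases h2 : l = i + 1
    · subst h2; simp [burauFun, e1, e2, e3]
    · by_cases h3 : l = j
      · subst h3; simp [burauFun, e1.symm, e2.symm, e3.symm]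
      · by_cases h4 : l = j + 1
        · subst h4; simp [burauFun, e1.symm, e2.symm, e3.symm]
        · simp [burauFun, h1, h2, h3, h4]

lemma burauFun_braid (u : ℚ) (hu : u = 0 ∨ u = 1) (i : ℕ) (v : ℕ → ℚ) :
    burauFun u i (burauFun u (i + 1) (burauFun u i v)) =
      burauFun u (i + 1) (burauFun u i (burauFun u (i + 1) v)) := by
  funext l
  have e1 : i ≠ i + 1 + 1 := by omega
  by_cases h1 : l = i
  · subst h1; rcases hu with rfl | rfl <;> simp [burauFun, e1, e1.symm] <;> ring
  · by_cases h2 : l = i + 1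
    · subst h2; rcases hu with rfl | rfl <;> simp [burauFun, e1, e1.symm] <;> ring
    · by_cases h3 : l = i + 1 + 1
      · subst h3; rcases hu with rfl | rfl <;> simp [burauFun, e1, e1.symm] <;> ring
      · simp [burauFun, h1, h2, h3]

/-- The Burau representation of `B 6` at `t = 2` (`u = 0`), or its mirror image (`u = 1`). -/
noncomputable def burau (u : ℚ) (hu : u = 0 ∨ u = 1) : B 6 →* Equiv.Perm (ℕ → ℚ) :=
  PresentedGroup.toGroup (f := fun i : Fin (6 - 1) => burauPerm u i) (by
    rintro r (⟨i, j, h, rfl⟩ | ⟨i, j, h, rfl⟩)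
    · simp only [map_mul, map_inv, FreeGroup.lift_apply_of]
      rw [mul_inv_eq_one, mul_inv_eq_iff_eq_mul]
      exact Equiv.ext fun v => burauFun_comm u i j h v
    · simp only [map_mul, map_inv, FreeGroup.lift_apply_of]
      rw [mul_inv_eq_one, mul_inv_eq_iff_eq_mul, mul_inv_eq_iff_eq_mul, ← h]
      exact Equiv.ext fun v => burauFun_braid u hu i v)

lemma burau_sigma (u : ℚ) (hu : u = 0 ∨ u = 1) (i : Fin (6 - 1)) (v : ℕ → ℚ) :
    burau u hu (σ i) v = burauFun u i v := by
  have : burau u hu (σ i) = burauPerm u i := PresentedGroup.toGroup.of _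
  rw [this]
  rfl

/-- All coordinates of the vector are integers. -/
def Integral (v : ℕ → ℚ) : Prop := ∀ j, ∃ z : ℤ, v j = z

lemma integral_burauFun {u : ℚ} (hu : u = 0 ∨ u = 1) (i : ℕ) {v : ℕ → ℚ} (hv : Integral v) :
    Integral (burauFun u i v) := by
  intro j
  obtain ⟨x, hx⟩ := hv i
  obtain ⟨y, hy⟩ := hv (i + 1)
  obtain ⟨w, hw⟩ : ∃ w : ℤ, u = w := by
    rcases hu with rfl | rfl
    · exact ⟨0, by simp⟩
    · exact ⟨1, by simp⟩
  unfold burauFun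
  split_ifs
  · exact ⟨(w - 1) * x + (2 - w) * y, by rw [hx, hy, hw]; push_cast; ring⟩
  · exact ⟨(1 + w) * x - w * y, by rw [hx, hy, hw]; push_cast; ring⟩
  · exact hv j

lemma integral_of_mem_P {u : ℚ} (hu : u = 0 ∨ u = 1) {x : B 6} (hx : x ∈ P 6) :
    ∀ v, Integral v → Integral (burau u hu x v) := by
  induction hx using Submonoid.closure_induction with
  | mem x h =>
    obtain ⟨i, rfl⟩ := h
    intro v hv
    rw [burau_sigma]
    exact integral_burauFun hu i hv
  | one => intro v hv; simpa using hv
  | mul x y _ _ ihx ihy =>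
    intro v hv
    rw [map_mul, Equiv.Perm.mul_apply]
    exact ihx _ (ihy _ hv)

/-- If `σ i` divides `x` on the left in the positive monoid, then the coordinates `i` and `i + 1`
of the image under `x` of an integral vector have the same parity. -/
lemma parity {u : ℚ} (hu : u = 0 ∨ u = 1) {x : B 6} {i : Fin (6 - 1)}
    (hx : (σ i)⁻¹ * x ∈ P 6) {v : ℕ → ℚ} (hv : Integral v) :
    ∃ z : ℤ, burau u hu x v i - burau u hu x v (i + 1) = 2 * z := by
  have key := integral_of_mem_P hu hx v hv
  obtain ⟨y, rfl⟩ : ∃ y, x = σ i * y := ⟨(σ i)⁻¹ * x, by simp⟩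
  rw [inv_mul_cancel_left] at key
  rw [map_mul, Equiv.Perm.mul_apply, burau_sigma]
  obtain ⟨p, hp⟩ := key i
  obtain ⟨q, hq⟩ := key (i + 1)
  refine ⟨q - p, ?_⟩
  simp only [burauFun, if_true, Nat.succ_ne_self, if_false, hp, hq]
  push_cast
  ring

/-- The basis vector with index `j`. -/
def basisVec (j : ℕ) : ℕ → ℚ := fun l => if l = j then 1 else 0

lemma integral_basisVec (j : ℕ) : Integral (basisVec j) := by
  intro l
  unfold basisVec
  split_ifs
  · exact ⟨1, by simp⟩
  · exact ⟨0, by simp⟩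

/-- A generator acting on coordinates away from `j` fixes the basis vector `j`, and so do its
powers. -/
lemma burau_pow_basisVec (u : ℚ) (hu : u = 0 ∨ u = 1) (i : Fin (6 - 1)) (j : ℕ)
    (h1 : j ≠ i) (h2 : j ≠ i + 1) (m : ℕ) :
    burau u hu (σ i ^ m) (basisVec j) = basisVec j := by
  induction m with
  | zero => simp
  | succ m ih =>
    rw [pow_succ, map_mul, Equiv.Perm.mul_apply, burau_sigma]
    convert ih using 2
    funext l
    unfold burauFun basisVec
    split_ifs <;> first | omega | simp

/-! ### Non-divisibility -/

/-- An odd integer, as a rational number, is not twice an integer. -/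
lemma not_even_of {q : ℚ} (n : ℤ) (hq : q = 2 * n + 1) : ¬ ∃ z : ℤ, q = 2 * z := by
  rintro ⟨z, hz⟩
  rw [hq] at hz
  have : 2 * n + 1 = 2 * z := by exact_mod_cast hz
  omega

/-- `σ₁`, `σ₄` and `σ₅` do not divide `core * σ₁ ^ m` on the left: in each case a basis vector
fixed by `σ₁` is sent by `core` to a vector violating `parity`. -/
lemma core_not_left (m : ℕ) (i : Fin (6 - 1)) (hi : i = 0 ∨ i = 3 ∨ i = 4) :
    (σ i)⁻¹ * ((σ 1 * σ 2 * σ 3 * σ 4 * σ 0 * σ 1 * σ 2 * σ 3 : B 6) * σ 0 ^ m) ∉ P 6 := by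
  intro h
  rcases hi with rfl | rfl | rfl
  · have h1 := parity (Or.inr rfl) h (integral_basisVec 4)
    revert h1
    simp only [map_mul, Equiv.Perm.mul_apply]
    rw [burau_pow_basisVec _ _ _ _ (by decide) (by decide)]
    refine not_even_of 0 ?_
    norm_num [burau_sigma, burauFun, basisVec]
  · have h1 := parity (Or.inl rfl) h (integral_basisVec 2)
    revert h1
    simp only [map_mul, Equiv.Perm.mul_apply]
    rw [burau_pow_basisVec _ _ _ _ (by decide) (by decide)]
    refine not_even_of (-1) ?_
    norm_num [burau_sigma, burauFun, basisVec]
  · have h1 := parity (Or.inl rfl) h (integral_basisVec 2)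
    revert h1
    simp only [map_mul, Equiv.Perm.mul_apply]
    rw [burau_pow_basisVec _ _ _ _ (by decide) (by decide)]
    refine not_even_of 0 ?_
    norm_num [burau_sigma, burauFun, basisVec]

/-- `σ₂` and `σ₃` do not divide `rev (σ₃ ^ m * core)` on the left. -/
lemma rev_core_not_left (m : ℕ) (i : Fin (6 - 1)) (hi : i = 1 ∨ i = 2) :
    (σ i)⁻¹ * ((σ 3 * σ 2 * σ 1 * σ 0 * σ 4 * σ 3 * σ 2 * σ 1 : B 6) * σ 2 ^ m) ∉ P 6 := by
  intro h
  have h1 := parity (Or.inr rfl) h (integral_basisVec 4)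
  revert h1
  simp only [map_mul, Equiv.Perm.mul_apply]
  rw [burau_pow_basisVec _ _ _ _ (by decide) (by decide)]
  rcases hi with rfl | rfl
  · refine not_even_of (-1) ?_
    norm_num [burau_sigma, burauFun, basisVec]
  · refine not_even_of 0 ?_
    norm_num [burau_sigma, burauFun, basisVec]

/-! ### The infinite family -/

/-- The exponent sum homomorphism. -/
def expSum : B 6 →* Multiplicative ℤ :=
  PresentedGroup.toGroup (f := fun _ : Fin (6 - 1) => Multiplicative.ofAdd (1 : ℤ)) (by
    rintro r (⟨i, j, h, rfl⟩ | ⟨i, j, h, rfl⟩) <;> simp)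

lemma expSum_sigma (i : Fin (6 - 1)) : expSum (σ i) = Multiplicative.ofAdd (1 : ℤ) :=
  PresentedGroup.toGroup.of _

/-- an infinite family of pairwise ε-twisted conjugated positive
palindromic-free braids in `B₆`.  Here `σ 0, …, σ 4 : B 6` are `σ₁, …, σ₅`. -/
theorem infinite_family_palindromic_free
    (rev : B 6 → B 6)
    (hrev_mul : ∀ x y : B 6, rev (x * y) = rev y * rev x)
    (hrev_gen : ∀ i : Fin (6 - 1), rev (σ i) = σ i) :
    let s : Fin (6 - 1) → B 6 := σ
    let core : B 6 := s 1 * s 2 * s 3 * s 4 * s 0 * s 1 * s 2 * s 3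
    let α : ℕ → B 6 := fun k => (s 2) ^ k * core * (s 0) ^ k
    (∀ k : ℕ, α k ∈ P 6 ∧ PalFree (α k)) ∧
    (∀ k : ℕ, (s 4) ^ k * ((s 2) ^ k * core * (s 0) ^ k) * (s 4) ^ k =
      (s 0 * s 2) ^ k * core * (s 2 * s 0) ^ k) ∧
    (∀ k : ℕ, ∃ c : B 6, α k = rev c * α 0 * c) ∧
    Function.Injective α := by
  intro s core α
  have c02 : Commute (s 0) (s 2) := sigma_comm 0 2 (by decide)
  have c04 : Commute (s 0) (s 4) := sigma_comm 0 4 (by decide)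
  have c24 : Commute (s 2) (s 4) := sigma_comm 2 4 (by decide)
  obtain ⟨k0, k2, k4⟩ : SemiconjBy core (s 0) (s 2) ∧ SemiconjBy core (s 2) (s 4) ∧
      SemiconjBy core (s 4) (s 0) :=
    core_semiconj (sigma_braid 0 1 (by decide)) (sigma_braid 1 2 (by decide))
      (sigma_braid 2 3 (by decide)) (sigma_braid 3 4 (by decide)) c02
      (sigma_comm 0 3 (by decide)) c04 (sigma_comm 1 3 (by decide))
      (sigma_comm 1 4 (by decide)) c24
  have hα_right : ∀ k, α k = core * s 0 ^ (2 * k) := fun k => by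
    have := (k0.pow_right k).eq
    simp only [α]
    rw [← this, mul_assoc, ← pow_add, two_mul]
  have hα_left : ∀ k, α k = s 2 ^ (2 * k) * core := fun k => by
    have := (k0.pow_right k).eq
    simp only [α]
    rw [mul_assoc, this, ← mul_assoc, ← pow_add, two_mul]
  have hident : ∀ k : ℕ, (s 4) ^ k * ((s 2) ^ k * core * (s 0) ^ k) * (s 4) ^ k =
      (s 0 * s 2) ^ k * core * (s 2 * s 0) ^ k := fun k => by
    have e0 := (k0.pow_right k).eq
    have e2 := (k2.pow_right k).eq
    have e4 := (k4.pow_right k).eq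
    have d02 := (c02.pow_pow k k).eq
    have d04 := (c04.pow_pow k k).eq
    have d24 := (c24.pow_pow k k).eq
    rw [c02.mul_pow, c02.symm.mul_pow]
    generalize s 0 ^ k = a at *
    generalize s 2 ^ k = b at *
    generalize s 4 ^ k = c at *
    -- both sides equal `a * b * b * c * core`
    calc c * (b * core * a) * c = c * b * (core * a) * c := by simp only [mul_assoc]
      _ = c * b * b * (core * c) := by rw [e0]; simp only [mul_assoc]
      _ = c * b * (b * a) * core := by rw [e4]; simp only [mul_assoc]
      _ = c * b * (a * b) * core := by rw [d02]
      _ = c * (b * a) * b * core := by simp only [mul_assoc]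
      _ = c * (a * b) * b * core := by rw [d02]
      _ = (c * a) * b * b * core := by simp only [mul_assoc]
      _ = a * (c * b) * b * core := by rw [← d04]; simp only [mul_assoc]
      _ = a * b * c * b * core := by rw [← d24]; simp only [mul_assoc]
      _ = a * b * c * (core * a) := by rw [e0]; simp only [mul_assoc]
      _ = a * b * (c * core) * a := by simp only [mul_assoc]
      _ = a * b * core * (b * a) := by rw [← e2]; simp only [mul_assoc]
  have hrev_one : rev 1 = 1 := by
    have := hrev_mul 1 1
    rw [mul_one] at this
    exact left_eq_mul.mp this
  have hrev_inv : ∀ x, rev x⁻¹ = (rev x)⁻¹ := fun x => by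
    have := hrev_mul x x⁻¹
    rw [mul_inv_cancel, hrev_one] at this
    exact eq_inv_of_mul_eq_one_left this.symm
  have hrev_pow : ∀ x (k : ℕ), rev (x ^ k) = rev x ^ k := fun x k => by
    induction k with
    | zero => simpa using hrev_one
    | succ k ih => rw [pow_succ, hrev_mul, ih, pow_succ']
  have hrev_P : ∀ x ∈ P 6, rev x ∈ P 6 := fun x hx => by
    induction hx using Submonoid.closure_induction with
    | mem x h =>
      obtain ⟨i, rfl⟩ := h
      rw [hrev_gen]
      exact Submonoid.subset_closure ⟨i, rfl⟩
    | one => rw [hrev_one]; exact one_mem _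
    | mul x y _ _ ihx ihy => rw [hrev_mul]; exact mul_mem ihy ihx
  have hs : ∀ i, s i ∈ P 6 := fun i => Submonoid.subset_closure ⟨i, rfl⟩
  have hleft : ∀ x i, (s i)⁻¹ * x * (s i)⁻¹ ∈ P 6 → (s i)⁻¹ * x ∈ P 6 := fun x i h => by
    simpa using mul_mem h (hs i)
  have hright : ∀ x i, (s i)⁻¹ * x * (s i)⁻¹ ∈ P 6 → (s i)⁻¹ * rev x ∈ P 6 := fun x i h => by
    have h1 : x * (s i)⁻¹ ∈ P 6 := by simpa [mul_assoc] using mul_mem (hs i) h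
    have h2 := hrev_P _ h1
    rwa [hrev_mul, hrev_inv, hrev_gen] at h2
  refine ⟨fun k => ⟨?_, fun i hi => ?_⟩, hident, fun k => ?_, fun k l hkl => ?_⟩
  · have hcore : core ∈ P 6 := by
      simp only [core]
      repeat' apply mul_mem
      all_goals exact hs _
    exact mul_mem (mul_mem (pow_mem (hs _) _) hcore) (pow_mem (hs _) _)
  · have hL := hleft _ _ hi
    have hR := hright _ _ hi
    rw [hα_right] at hL
    have hrev_α : rev (α k) =
        (σ 3 * σ 2 * σ 1 * σ 0 * σ 4 * σ 3 * σ 2 * σ 1 : B 6) * σ 2 ^ (2 * k) := by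
      rw [hα_left, hrev_mul, hrev_pow]
      simp only [core, s, hrev_mul, hrev_gen, mul_assoc]
    rw [hrev_α] at hR
    have hcases : (i = 0 ∨ i = 3 ∨ i = 4) ∨ (i = 1 ∨ i = 2) := by
      clear hi hL hR
      revert i
      decide
    rcases hcases with h | h
    · exact core_not_left _ i h hL
    · exact rev_core_not_left _ i h hR
  · refine ⟨(s 2 * s 0) ^ k * ((s 4) ^ k)⁻¹, ?_⟩
    have h := hident k
    have hα0 : α 0 = core := by simp [α]
    rw [hα0, hrev_mul, hrev_inv, hrev_pow, hrev_pow, hrev_mul, hrev_gen, hrev_gen, hrev_gen]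
    change s 2 ^ k * core * s 0 ^ k =
      (s 4 ^ k)⁻¹ * (s 0 * s 2) ^ k * core * ((s 2 * s 0) ^ k * (s 4 ^ k)⁻¹)
    calc s 2 ^ k * core * s 0 ^ k
        = (s 4 ^ k)⁻¹ * (s 4 ^ k * (s 2 ^ k * core * s 0 ^ k) * s 4 ^ k) * (s 4 ^ k)⁻¹ := by group
      _ = _ := by rw [h]; simp only [mul_assoc]
  · rw [hα_right, hα_right] at hkl
    have h := congrArg expSum (mul_left_cancel hkl)
    rw [map_pow, map_pow, expSum_sigma] at h
    have h2 := congrArg Multiplicative.toAdd h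
    simp at h2
    exact h2
end

section
/- Let a, b ∈ P be positive braids, let a_1,…,a_r be a left normal form of a and b_1,…,b_s a left normal form of b, and let a_1',…,a_r' be a right normal form of a and b_1',…,b_s' a right normal form of b. Let k be a positive integer with k ≤ r and k ≤ s, and suppose ℓ(a⁻¹b) ≤ r + s − 2k + 1. Then either a_1'⋯a_k' ≼ b_1⋯b_k or b_1'⋯b_k' ≼ a_1⋯a_k. -/
/-! ### The positive braid monoid -/

/-- Adjacency of generator indices: `|i - j| = 1`. -/
def Adj {m : ℕ} (i j : Fin m) : Prop := (i : ℕ) + 1 = j ∨ (j : ℕ) + 1 = i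

theorem Adj.symm {m : ℕ} {i j : Fin m} (h : Adj i j) : Adj j i := Or.symm h

theorem Adj.ne {m : ℕ} {i j : Fin m} (h : Adj i j) : i ≠ j := by
  rintro rfl
  unfold Adj at h
  omega

/-- The defining relations of the positive braid monoid, on positive words. -/
inductive MRel (m : ℕ) : FreeMonoid (Fin m) → FreeMonoid (Fin m) → Prop
  | comm (i j : Fin m) (hne : i ≠ j) (h : ¬ Adj i j) :
      MRel m (FreeMonoid.of i * FreeMonoid.of j) (FreeMonoid.of j * FreeMonoid.of i)
  | braid (i j : Fin m) (h : Adj i j) :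
      MRel m (FreeMonoid.of i * (FreeMonoid.of j * FreeMonoid.of i))
        (FreeMonoid.of j * (FreeMonoid.of i * FreeMonoid.of j))

/-- The positive braid monoid with `m` generators, presented as an abstract monoid. It is shown
below to embed in the braid group as the submonoid of positive braids. -/
abbrev BM (m : ℕ) := PresentedMonoid (MRel m)

namespace BM

variable {m : ℕ}

/-- The Artin generators of the positive braid monoid. -/
def g (i : Fin m) : BM m := PresentedMonoid.of (MRel m) i

theorem comm {i j : Fin m} (hne : i ≠ j) (h : ¬ Adj i j) (x : BM m) :
    g i * (g j * x) = g j * (g i * x) := by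
  rw [← mul_assoc, ← mul_assoc]
  exact congrArg (· * x) (PresentedMonoid.mk_eq_mk_of_rel (MRel.comm i j hne h))

theorem braid {i j : Fin m} (h : Adj i j) (x : BM m) :
    g i * (g j * (g i * x)) = g j * (g i * (g j * x)) := by
  have := congrArg (· * x) (PresentedMonoid.mk_eq_mk_of_rel (MRel.braid i j h))
  simp only [map_mul, mul_assoc] at this
  exact this

/-- Word length, as a monoid homomorphism; it is well defined because the relations are
homogeneous. -/
def lenHom (m : ℕ) : BM m →* Multiplicative ℕ :=
  PresentedMonoid.lift (fun _ => Multiplicative.ofAdd 1) (by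
    rintro a b (⟨i, j, _, _⟩ | ⟨i, j, _⟩) <;> simp)

/-- The length of a positive braid. -/
def len (x : BM m) : ℕ := (lenHom m x).toAdd

@[simp] theorem len_mul (x y : BM m) : len (x * y) = len x + len y := by simp [len]
@[simp] theorem len_one : len (1 : BM m) = 0 := by simp [len]
@[simp] theorem len_g (i : Fin m) : len (g i) = 1 := by simp [len, lenHom, g]

theorem mk_of_mul (i : Fin m) (w : FreeMonoid (Fin m)) :
    PresentedMonoid.mk (MRel m) (FreeMonoid.of i * w) = g i * PresentedMonoid.mk (MRel m) w := by
  rw [map_mul]; rfl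

theorem cases_g (x : BM m) : x = 1 ∨ ∃ i y, x = g i * y := by
  obtain ⟨w, rfl⟩ := PresentedMonoid.surjective_mk x
  cases w using FreeMonoid.casesOn with
  | one => exact Or.inl (map_one _)
  | of_mul i w => exact Or.inr ⟨i, _, mk_of_mul i w⟩

open Classical in
/-- The right complement `i \ j`: the element with `g i * comp i j = lcm (g i) (g j)`. -/
noncomputable def comp (i j : Fin m) : BM m :=
  if i = j then 1 else if Adj i j then g j * g i else g j

@[simp] theorem comp_self (i : Fin m) : comp i i = 1 := by simp [comp]

theorem comp_adj {i j : Fin m} (h : Adj i j) (x : BM m) : comp i j * x = g j * (g i * x) := by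
  simp [comp, h, h.ne, mul_assoc]

theorem comp_comm {i j : Fin m} (hne : i ≠ j) (h : ¬ Adj i j) (x : BM m) :
    comp i j * x = g j * x := by
  simp [comp, h, hne]

theorem comp_spec (i j : Fin m) (x : BM m) :
    g i * (comp i j * x) = g j * (comp j i * x) := by
  rcases eq_or_ne i j with rfl | hne
  · rfl
  by_cases h : Adj i j
  · rw [comp_adj h, comp_adj h.symm, braid h]
  · rw [comp_comm hne h, comp_comm hne.symm (fun h' => h h'.symm), comm hne h]

/-- Garside's divisibility property for elements `u` of length `< N`: any common multiple of two
generators is a multiple of their lcm. -/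
def HP (m N : ℕ) : Prop := ∀ (s t : Fin m) (u v : BM m), len u < N → g s * u = g t * v →
  ∃ w, u = comp s t * w ∧ v = comp t s * w

theorem HP.eq {N : ℕ} (H : HP m N) {s : Fin m} {u v : BM m} (hl : len u < N)
    (h : g s * u = g s * v) : u = v := by
  obtain ⟨w, rfl, rfl⟩ := H s s u v hl h
  rfl

theorem HP.adj {N : ℕ} (H : HP m N) {s t : Fin m} (a : Adj s t) {u v : BM m} (hl : len u < N)
    (h : g s * u = g t * v) : ∃ w, u = g t * (g s * w) ∧ v = g s * (g t * w) := by
  obtain ⟨w, rfl, rfl⟩ := H s t u v hl h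
  exact ⟨w, comp_adj a w, comp_adj a.symm w⟩

theorem HP.comm {N : ℕ} (H : HP m N) {s t : Fin m} (hne : s ≠ t) (a : ¬ Adj s t) {u v : BM m}
    (hl : len u < N) (h : g s * u = g t * v) : ∃ w, u = g t * w ∧ v = g s * w := by
  obtain ⟨w, rfl, rfl⟩ := H s t u v hl h
  exact ⟨w, comp_comm hne a w, comp_comm hne.symm (fun h' => a h'.symm) w⟩

/-- The cube condition: if `lcm (t, s)` and `lcm (t, r)` have a common multiple, then it is a
multiple of `lcm (s, r)`, with the expected cofactors. This is the transitivity step in Garside's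
induction; it amounts to computing the lcm of `s, t, r` in each of the parabolic types `A₁³`,
`A₂ × A₁`, `A₃`. -/
theorem HP.cube {N : ℕ} (H : HP m N) (s t r : Fin m) (x y : BM m)
    (hl : len (comp t s * x) ≤ N) (h : comp t s * x = comp t r * y) :
    ∃ z, comp s t * x = comp s r * z ∧ comp r t * y = comp r s * z := by
  have na : ∀ {i j : Fin m}, ¬ Adj i j → ¬ Adj j i := fun hij hji => hij hji.symm
  rcases eq_or_ne s t with rfl | hst
  · refine ⟨y, ?_, rfl⟩
    simpa using h
  rcases eq_or_ne t r with rfl | htr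
  · refine ⟨x, rfl, ?_⟩
    simpa using h.symm
  rcases eq_or_ne s r with rfl | hsr
  · refine ⟨comp s t * x, by simp, ?_⟩
    by_cases a : Adj t s
    · rw [comp_adj a, comp_adj a] at h
      rw [comp_adj a] at hl
      simp at hl
      have h1 := H.eq (by simp; omega) h
      have h2 := H.eq (by omega) h1
      simp [h2]
    · rw [comp_comm hst.symm a, comp_comm hst.symm a] at h
      rw [comp_comm hst.symm a] at hl
      simp at hl
      have h1 := H.eq (by omega) h
      simp [h1]
  -- Now `s, t, r` are distinct; the three adjacencies cannot all hold.
  by_cases ats : Adj t s <;> by_cases atr : Adj t r <;> by_cases asr : Adj s r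
  · exfalso; unfold Adj at *; omega
  · rw [comp_adj ats, comp_adj atr] at h
    rw [comp_adj ats] at hl
    simp at hl
    obtain ⟨p, h1, h2⟩ := H.comm hsr asr (by
      try simp only [len_mul, len_g] at *
      omega) h
    have l1 := congrArg len h1
    have l2 := congrArg len h2
    simp at l1 l2
    obtain ⟨q, rfl, hp⟩ := H.adj atr (by
      try simp only [len_mul, len_g] at *
      omega) h1
    obtain ⟨q', rfl, hp'⟩ := H.adj ats (by
      try simp only [len_mul, len_g] at *
      omega) h2
    rw [hp] at hp'
    simp at l1 l2
    have h3 := H.eq (by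
      try simp only [len_mul, len_g] at *
      omega) hp'
    obtain ⟨z, rfl, rfl⟩ := H.comm hsr.symm (na asr) (by
      try simp only [len_mul, len_g] at *
      omega) h3
    refine ⟨g t * (g r * (g s * (g t * z))), ?_, ?_⟩
    · rw [comp_adj ats.symm, comp_comm hsr asr, BM.comm hsr asr, BM.braid ats.symm,
        BM.braid atr]
    · rw [comp_adj atr.symm, comp_comm hsr.symm (na asr), BM.comm hsr.symm (na asr),
        BM.braid atr.symm, BM.braid ats, BM.comm hsr asr]
  · rw [comp_adj ats, comp_comm htr atr] at h
    rw [comp_adj ats] at hl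
    simp at hl
    obtain ⟨p, h1, rfl⟩ := H.adj asr (by
      try simp only [len_mul, len_g] at *
      omega) h
    obtain ⟨q, rfl, h2⟩ := H.comm htr atr (by
      try simp only [len_mul, len_g] at *
      omega) h1
    have l1 := congrArg len h2
    simp at l1 hl
    obtain ⟨z, rfl, rfl⟩ := H.adj ats.symm (by
      try simp only [len_mul, len_g] at *
      omega) h2
    refine ⟨g t * (g s * (g r * z)), ?_, ?_⟩
    · rw [comp_adj ats.symm, comp_adj asr, BM.braid asr, BM.comm htr atr,
        ← BM.comm htr atr z, BM.braid ats]
    · rw [comp_comm htr.symm (na atr), comp_adj asr.symm, ← BM.comm htr atr (g s * z),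
        BM.braid ats, BM.braid asr, BM.comm htr atr]
  · rw [comp_adj ats, comp_comm htr atr] at h
    rw [comp_adj ats] at hl
    simp at hl
    obtain ⟨p, h1, rfl⟩ := H.comm hsr asr (by
      try simp only [len_mul, len_g] at *
      omega) h
    obtain ⟨z, rfl, rfl⟩ := H.comm htr atr (by
      try simp only [len_mul, len_g] at *
      omega) h1
    refine ⟨g t * (g s * z), ?_, ?_⟩
    · rw [comp_adj ats.symm, comp_comm hsr asr, BM.comm hsr asr, BM.comm htr atr]
    · rw [comp_comm htr.symm (na atr), comp_comm hsr.symm (na asr), BM.braid ats]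
  · rw [comp_comm hst.symm ats, comp_adj atr] at h
    rw [comp_comm hst.symm ats] at hl
    simp at hl
    obtain ⟨p, rfl, h1⟩ := H.adj asr (by
      try simp only [len_mul, len_g] at *
      omega) h
    have l1 := congrArg len h1
    simp at l1 hl
    obtain ⟨q, rfl, h2⟩ := H.comm hst.symm ats (by
      try simp only [len_mul, len_g] at *
      omega) h1
    simp at l1
    have l2 := congrArg len h2
    simp at l2
    obtain ⟨z, rfl, rfl⟩ := H.adj atr.symm (by
      try simp only [len_mul, len_g] at *
      omega) h2
    refine ⟨g t * (g r * (g s * z)), ?_, ?_⟩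
    · rw [comp_comm hst (na ats), comp_adj asr, ← BM.comm hst.symm ats (g r * z),
        BM.braid atr, BM.braid asr.symm, BM.comm hst.symm ats]
    · rw [comp_adj atr.symm, comp_adj asr.symm, BM.braid asr.symm, BM.comm hst.symm ats,
        ← BM.comm hst.symm ats z, BM.braid atr]
  · rw [comp_comm hst.symm ats, comp_adj atr] at h
    rw [comp_comm hst.symm ats] at hl
    simp at hl
    obtain ⟨p, rfl, h1⟩ := H.comm hsr asr (by
      try simp only [len_mul, len_g] at *
      omega) h
    have l1 := congrArg len h1
    simp at l1 hl
    obtain ⟨z, rfl, rfl⟩ := H.comm hst.symm ats (by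
      try simp only [len_mul, len_g] at *
      omega) h1
    refine ⟨g t * (g r * z), ?_, ?_⟩
    · rw [comp_comm hst (na ats), comp_comm hsr asr, BM.braid atr]
    · rw [comp_adj atr.symm, comp_comm hsr.symm (na asr), BM.comm hsr.symm (na asr),
        BM.comm hst.symm ats]
  · rw [comp_comm hst.symm ats, comp_comm htr atr] at h
    rw [comp_comm hst.symm ats] at hl
    simp at hl
    obtain ⟨z, rfl, rfl⟩ := H.adj asr (by
      try simp only [len_mul, len_g] at *
      omega) h
    refine ⟨g t * z, ?_, ?_⟩
    · rw [comp_comm hst (na ats), comp_adj asr, BM.comm htr atr, BM.comm hst.symm ats]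
    · rw [comp_comm htr.symm (na atr), comp_adj asr.symm, BM.comm hst.symm ats, BM.comm htr atr]
  · rw [comp_comm hst.symm ats, comp_comm htr atr] at h
    rw [comp_comm hst.symm ats] at hl
    simp at hl
    obtain ⟨z, rfl, rfl⟩ := H.comm hsr asr (by
      try simp only [len_mul, len_g] at *
      omega) h
    refine ⟨g t * z, ?_, ?_⟩
    · rw [comp_comm hst (na ats), comp_comm hsr asr, BM.comm htr atr]
    · rw [comp_comm htr.symm (na atr), comp_comm hsr.symm (na asr), BM.comm hst.symm ats]

/-- The inductive step of Garside's theorem, by induction on the derivation that two words of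
length at most `N + 1` are equivalent. -/
theorem HP.words {N : ℕ} (H : HP m N) {x y : FreeMonoid (Fin m)} (h : ConGen.Rel (MRel m) x y)
    (hl : len (PresentedMonoid.mk (MRel m) x) ≤ N + 1) (s t : Fin m) (u v : FreeMonoid (Fin m))
    (hx : x = FreeMonoid.of s * u) (hy : y = FreeMonoid.of t * v) :
    ∃ w, PresentedMonoid.mk (MRel m) u = comp s t * w ∧
      PresentedMonoid.mk (MRel m) v = comp t s * w := by
  have cancel : ∀ {i j : Fin m} {a b : FreeMonoid (Fin m)},
      FreeMonoid.of i * a = FreeMonoid.of j * b → i = j ∧ a = b := by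
    intro i j a b hab
    exact List.cons.inj hab
  have toMk : ∀ {a b : FreeMonoid (Fin m)}, ConGen.Rel (MRel m) a b →
      PresentedMonoid.mk (MRel m) a = PresentedMonoid.mk (MRel m) b :=
    fun h => PresentedMonoid.mk_eq_mk_iff.2 h
  induction h generalizing s t u v with
  | of x y hxy =>
    cases hxy with
    | comm i j hne ha =>
      obtain ⟨rfl, rfl⟩ := cancel hx
      obtain ⟨rfl, rfl⟩ := cancel hy
      refine ⟨1, ?_, ?_⟩
      · rw [comp_comm hne ha, mul_one]; rfl
      · rw [comp_comm hne.symm (fun h' => ha h'.symm), mul_one]; rfl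
    | braid i j ha =>
      obtain ⟨rfl, rfl⟩ := cancel hx
      obtain ⟨rfl, rfl⟩ := cancel hy
      refine ⟨1, ?_, ?_⟩
      · rw [comp_adj ha, mul_one]; rfl
      · rw [comp_adj ha.symm, mul_one]; rfl
  | refl x =>
    obtain ⟨rfl, rfl⟩ := cancel (hx.symm.trans hy)
    exact ⟨PresentedMonoid.mk (MRel m) u, by simp, by simp⟩
  | symm hxy ih =>
    rw [← toMk hxy] at hl
    obtain ⟨w, h1, h2⟩ := ih hl t s v u hy hx
    exact ⟨w, h2, h1⟩
  | @trans x z y hxz hzy ih1 ih2 =>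
    have hlz := hl
    rw [toMk hxz] at hlz
    cases z using FreeMonoid.casesOn with
    | one =>
      have := congrArg len (toMk hxz)
      rw [hx, mk_of_mul] at this
      simp at this
    | of_mul r p =>
      obtain ⟨w1, h1, h2⟩ := ih1 hl s r u p hx rfl
      obtain ⟨w2, h3, h4⟩ := ih2 hlz r t p v rfl hy
      rw [mk_of_mul] at hlz
      simp at hlz
      obtain ⟨z, h5, h6⟩ := H.cube s r t w1 w2 (by rw [← h2]; omega) (h2.symm.trans h3)
      exact ⟨z, h1.trans h5, h4.trans h6⟩
  | @mul x y x' y' h1 h2 ih1 ih2 =>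
    cases x using FreeMonoid.casesOn with
    | one =>
      cases y using FreeMonoid.casesOn with
      | one =>
        rw [one_mul] at hx hy hl
        exact ih2 hl s t u v hx hy
      | of_mul j q =>
        have := congrArg len (toMk h1)
        rw [mk_of_mul] at this
        simp at this
        omega
    | of_mul i p =>
      cases y using FreeMonoid.casesOn with
      | one =>
        have := congrArg len (toMk h1)
        rw [mk_of_mul] at this
        simp at this
      | of_mul j q =>
        rw [mul_assoc] at hx hy
        obtain ⟨rfl, rfl⟩ := cancel hx
        obtain ⟨rfl, rfl⟩ := cancel hy
        obtain ⟨w, h3, h4⟩ := ih1 (by rw [map_mul, len_mul] at hl; omega) i j p q rfl rfl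
        refine ⟨w * PresentedMonoid.mk (MRel m) x', ?_, ?_⟩
        · rw [map_mul, h3, mul_assoc]
        · rw [map_mul, h4, mul_assoc, toMk h2]

theorem HP_all (m N : ℕ) : HP m N := by
  induction N with
  | zero => intro s t u v h; omega
  | succ N ih =>
    intro s t u v hl h
    obtain ⟨u, rfl⟩ := PresentedMonoid.surjective_mk u
    obtain ⟨v, rfl⟩ := PresentedMonoid.surjective_mk v
    rw [← mk_of_mul, ← mk_of_mul] at h
    exact ih.words (PresentedMonoid.mk_eq_mk_iff.1 h) (by rw [mk_of_mul]; simp; omega)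
      s t u v rfl rfl

/-- Garside's theorem: a common right multiple of two generators is a multiple of their lcm. -/
theorem garside {s t : Fin m} {u v : BM m} (h : g s * u = g t * v) :
    ∃ w, u = comp s t * w ∧ v = comp t s * w :=
  HP_all m (len u + 1) s t u v (Nat.lt_succ_self _) h

@[elab_as_elim]
theorem ind {C : BM m → Prop} (one : C 1) (mul : ∀ i x, C x → C (g i * x)) (x : BM m) : C x := by
  obtain ⟨w, rfl⟩ := PresentedMonoid.surjective_mk x
  induction w using FreeMonoid.inductionOn' with
  | one => rw [map_one]; exact one
  | of_mul i w ih => rw [mk_of_mul]; exact mul i _ ih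

/-! ### Cancellation and least common multiples in the braid monoid -/

theorem mul_left_cancel' {x u v : BM m} (h : x * u = x * v) : u = v := by
  induction x using ind with
  | one => simpa using h
  | mul i x ih =>
    rw [mul_assoc, mul_assoc] at h
    exact ih ((HP_all m _).eq (Nat.lt_succ_self _) h)

/-- Reversal of positive words, as a homomorphism to the opposite monoid. -/
def revHom (m : ℕ) : BM m →* (BM m)ᵐᵒᵖ :=
  PresentedMonoid.lift (fun i => MulOpposite.op (g i)) (by
    rintro a b (⟨i, j, hne, h⟩ | ⟨i, j, h⟩)
    · have := comm hne h (1 : BM m)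
      simp only [mul_one] at this
      simp [← MulOpposite.op_mul, this]
    · have := braid h (1 : BM m)
      simp only [mul_one] at this
      simp [← MulOpposite.op_mul, mul_assoc, this])

/-- The anti-automorphism of the braid monoid reversing positive words. -/
def rev (x : BM m) : BM m := (revHom m x).unop

@[simp] theorem rev_mul (x y : BM m) : rev (x * y) = rev y * rev x := by simp [rev]
@[simp] theorem rev_one : rev (1 : BM m) = 1 := by simp [rev]
@[simp] theorem rev_g (i : Fin m) : rev (g i) = g i := by simp [rev, revHom, g]
@[simp] theorem rev_rev (x : BM m) : rev (rev x) = x := by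
  induction x using ind with
  | one => simp
  | mul i x ih => simp [ih]

theorem mul_right_cancel' {x u v : BM m} (h : u * x = v * x) : u = v := by
  have := congrArg rev h
  rw [rev_mul, rev_mul] at this
  have := congrArg rev (mul_left_cancel' this)
  simpa using this

theorem mul_dvd_mul_iff (x : BM m) {u v : BM m} : x * u ∣ x * v ↔ u ∣ v := by
  constructor
  · rintro ⟨c, h⟩
    rw [mul_assoc] at h
    exact ⟨c, mul_left_cancel' h⟩
  · rintro ⟨c, rfl⟩
    exact ⟨c, (mul_assoc _ _ _).symm⟩

/-- Two elements with a common right multiple `z` have a right lcm, by induction on the length of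
`z`: if `x` starts with `s` and `y` with `t`, both lcms with `lcm (s, t)` exist and are combined. -/
theorem exists_lcm_of_dvd (N : ℕ) (x y z : BM m) (hN : len z ≤ N) (hx : x ∣ z) (hy : y ∣ z) :
    ∃ u, ∀ w, (x ∣ w ∧ y ∣ w) ↔ u ∣ w := by
  induction N generalizing x y z with
  | zero =>
    obtain ⟨c, rfl⟩ := hx
    rcases cases_g x with rfl | ⟨i, x', rfl⟩
    · exact ⟨y, fun w => ⟨fun h => h.2, fun h => ⟨one_dvd w, h⟩⟩⟩
    · simp at hN
  | succ N ih =>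
    rcases cases_g x with rfl | ⟨s, x', rfl⟩
    · exact ⟨y, fun w => ⟨fun h => h.2, fun h => ⟨one_dvd w, h⟩⟩⟩
    rcases cases_g y with rfl | ⟨t, y', rfl⟩
    · exact ⟨g s * x', fun w => ⟨fun h => h.1, fun h => ⟨h, one_dvd w⟩⟩⟩
    -- Any common multiple factors through `lcm (s, t)`.
    have key : ∀ w, g s * x' ∣ w → g t * y' ∣ w → ∃ v, w = g s * (comp s t * v) ∧
        x' ∣ comp s t * v ∧ y' ∣ comp t s * v := by
      rintro w ⟨c, rfl⟩ ⟨d, hd⟩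
      rw [mul_assoc, mul_assoc] at hd
      obtain ⟨v, h1, h2⟩ := garside hd
      exact ⟨v, by rw [mul_assoc, h1], ⟨c, h1.symm⟩, ⟨d, h2.symm⟩⟩
    obtain ⟨v, rfl, h1, h2⟩ := key z hx hy
    have hN' : len (comp s t * v) ≤ N := by rw [len_mul, len_g] at hN; omega
    have hlen : len (comp s t * v) = len (comp t s * v) := by
      have := congrArg len (comp_spec s t v)
      rw [len_mul, len_mul (g t), len_g, len_g] at this
      omega
    obtain ⟨u1, hu1⟩ := ih x' (comp s t) _ hN' h1 ⟨v, rfl⟩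
    obtain ⟨u2, hu2⟩ := ih y' (comp t s) _ (hlen ▸ hN') h2 ⟨v, rfl⟩
    obtain ⟨hx1, v1, rfl⟩ := (hu1 u1).2 dvd_rfl
    obtain ⟨hy2, v2, rfl⟩ := (hu2 u2).2 dvd_rfl
    have hv1 := (hu1 _).1 ⟨h1, v, rfl⟩
    have hv2 := (hu2 _).1 ⟨h2, v, rfl⟩
    rw [mul_dvd_mul_iff] at hv1 hv2
    obtain ⟨u3, hu3⟩ := ih v1 v2 v (by rw [len_mul] at hN'; omega) hv1 hv2
    refine ⟨g s * (comp s t * u3), fun w => ⟨?_, ?_⟩⟩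
    · rintro ⟨hxw, hyw⟩
      obtain ⟨q, rfl, h3, h4⟩ := key w hxw hyw
      rw [mul_dvd_mul_iff, mul_dvd_mul_iff]
      refine (hu3 q).1 ⟨?_, ?_⟩
      · exact (mul_dvd_mul_iff _).1 ((hu1 _).1 ⟨h3, q, rfl⟩)
      · exact (mul_dvd_mul_iff _).1 ((hu2 _).1 ⟨h4, q, rfl⟩)
    · intro hw
      obtain ⟨h3, h4⟩ := (hu3 u3).2 dvd_rfl
      constructor
      · refine dvd_trans ?_ hw
        rw [mul_dvd_mul_iff]
        exact dvd_trans hx1 ((mul_dvd_mul_iff _).2 h3)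
      · refine dvd_trans ?_ hw
        rw [comp_spec, mul_dvd_mul_iff]
        exact dvd_trans hy2 ((mul_dvd_mul_iff _).2 h4)

end BM

/-! ### The half twist -/

section HalfTwist

variable {M : Type*} [Monoid M] (s : ℕ → M)

/-- The descending product `s (k-1) ⋯ s 1 * s 0`. -/
def DD (k : ℕ) : M := (((List.range k).reverse).map s).prod

/-- The half twist on the generators `s 0, …, s (k-1)`. -/
def HT (k : ℕ) : M := ((List.range k).map (fun k => DD s (k + 1))).prod

theorem DD_succ (k : ℕ) : DD s (k + 1) = s k * DD s k := by
  simp [DD, List.range_succ]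

theorem HT_succ (k : ℕ) : HT s (k + 1) = HT s k * DD s (k + 1) := by
  simp [HT, List.range_succ]

theorem DD_zero : DD s 0 = 1 := by simp [DD]

theorem HT_zero : HT s 0 = 1 := by simp [HT]

theorem DD_tail (k : ℕ) : ∃ y, DD s (k + 1) = y * s 0 := by
  induction k with
  | zero => exact ⟨1, by simp [DD_succ, DD_zero]⟩
  | succ k ih =>
    obtain ⟨y, hy⟩ := ih
    exact ⟨s (k + 1) * y, by rw [DD_succ, hy, mul_assoc]⟩

variable {s} {N : ℕ}

theorem DD_comm (hc : ∀ i j, i + 1 < j → j < N → s i * s j = s j * s i)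
    {j k : ℕ} (hk : k < j) (hj : j < N) : DD s k * s j = s j * DD s k := by
  induction k with
  | zero => simp [DD_zero]
  | succ k ih =>
    rw [DD_succ, mul_assoc, ih (by omega), ← mul_assoc, hc k j hk hj, mul_assoc]

theorem HT_comm (hc : ∀ i j, i + 1 < j → j < N → s i * s j = s j * s i)
    {j k : ℕ} (hk : k < j) (hj : j < N) : HT s k * s j = s j * HT s k := by
  induction k with
  | zero => simp [HT_zero]
  | succ k ih =>
    rw [HT_succ, mul_assoc, DD_comm hc hk hj, ← mul_assoc, ih (by omega), mul_assoc]

theorem DD_shift (hc : ∀ i j, i + 1 < j → j < N → s i * s j = s j * s i)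
    (hb : ∀ i, i + 1 < N → s i * (s (i + 1) * s i) = s (i + 1) * (s i * s (i + 1)))
    {j k : ℕ} (hjk : j + 1 ≤ k) (hk : k < N) :
    DD s (k + 1) * s (j + 1) = s j * DD s (k + 1) := by
  induction k, hjk using Nat.le_induction with
  | base =>
    rw [DD_succ, DD_succ, mul_assoc, mul_assoc, DD_comm hc (Nat.lt_succ_self j) hk,
      ← mul_assoc (s j) (s (j + 1)), ← mul_assoc (s (j + 1)), ← hb j hk]
    simp only [mul_assoc]
  | succ k hjk ih =>
    rw [DD_succ, mul_assoc, ih (by omega), ← mul_assoc, ← hc j (k + 1) (by omega) hk, mul_assoc]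

theorem DD_mul_DD (hc : ∀ i j, i + 1 < j → j < N → s i * s j = s j * s i)
    (hb : ∀ i, i + 1 < N → s i * (s (i + 1) * s i) = s (i + 1) * (s i * s (i + 1)))
    {j k : ℕ} (hjk : j ≤ k) (hk : k < N) :
    DD s (k + 1) * DD s (j + 1) = DD s j * (DD s (k + 1) * s 0) := by
  induction j with
  | zero => simp [DD_zero, DD_succ s 0]
  | succ j ih =>
    rw [DD_succ s (j + 1), ← mul_assoc, DD_shift hc hb hjk hk, mul_assoc, ih (by omega),
      DD_succ s j, mul_assoc]

/-- The half twist conjugates the generators by the flip of the Dynkin diagram. -/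
theorem HT_flip (hc : ∀ i j, i + 1 < j → j < N → s i * s j = s j * s i)
    (hb : ∀ i, i + 1 < N → s i * (s (i + 1) * s i) = s (i + 1) * (s i * s (i + 1)))
    {i j k : ℕ} (hk : i + j + 1 = k) (hN : k ≤ N) :
    HT s k * s j = s i * HT s k := by
  induction k generalizing i j with
  | zero => omega
  | succ k ih =>
    cases j with
    | succ j =>
      rw [HT_succ, mul_assoc, DD_shift hc hb (by omega) (by omega), ← mul_assoc,
        ih (i := i) (by omega) (by omega), mul_assoc]
    | zero =>
      obtain rfl : i = k := by omega
      cases i with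
      | zero => simp [HT_succ, HT_zero, DD_succ, DD_zero]
      | succ i =>
        rw [HT_succ, HT_succ, mul_assoc, mul_assoc, ← mul_assoc (s (i + 1)),
          ← mul_assoc (s (i + 1)), ← HT_comm hc (Nat.lt_succ_self i) (by omega), mul_assoc,
          ← DD_mul_DD hc hb le_rfl (by omega), DD_succ s (i + 1)]
        simp only [mul_assoc]

theorem dvd_HT (hc : ∀ i j, i + 1 < j → j < N → s i * s j = s j * s i)
    (hb : ∀ i, i + 1 < N → s i * (s (i + 1) * s i) = s (i + 1) * (s i * s (i + 1)))
    (hcan : ∀ x y z : M, x * z = y * z → x = y) {j k : ℕ} (hj : j < k) (hN : k ≤ N) :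
    s j ∣ HT s k := by
  induction k with
  | zero => omega
  | succ k ih =>
    rcases Nat.lt_succ_iff_lt_or_eq.1 hj with h | rfl
    · rw [HT_succ]
      exact Dvd.dvd.mul_right (ih h (by omega)) _
    · obtain ⟨y, hy⟩ := DD_tail s j
      have h1 := HT_flip hc hb (i := j) (j := 0) rfl hN
      have h2 : HT s (j + 1) = HT s j * y * s 0 := by rw [HT_succ, hy, mul_assoc]
      refine ⟨HT s j * y, hcan _ _ (s 0) ?_⟩
      rw [h1, mul_assoc, ← h2]

end HalfTwist

namespace BM

variable {m : ℕ}

/-- The generators indexed by natural numbers, with value `1` out of range. -/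
def gN (m : ℕ) (j : ℕ) : BM m := if h : j < m then g ⟨j, h⟩ else 1

theorem gN_coe (i : Fin m) : gN m i = g i := by simp [gN]

theorem gN_comm (i j : ℕ) (hij : i + 1 < j) (hj : j < m) :
    gN m i * gN m j = gN m j * gN m i := by
  have hi : i < m := by omega
  have := comm (i := ⟨i, hi⟩) (j := ⟨j, hj⟩) (by simp; omega) (by simp [Adj]; omega) 1
  simpa [gN, hi, hj] using this

theorem gN_braid (i : ℕ) (hi : i + 1 < m) :
    gN m i * (gN m (i + 1) * gN m i) = gN m (i + 1) * (gN m i * gN m (i + 1)) := by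
  have hi' : i < m := by omega
  have := braid (i := ⟨i, hi'⟩) (j := ⟨i + 1, hi⟩) (by simp [Adj]) 1
  simpa [gN, hi, hi'] using this

/-- The Garside element of the braid monoid. -/
def D (m : ℕ) : BM m := HT (gN m) m

theorem D_g (i : Fin m) : ∃ j : Fin m, D m * g i = g j * D m := by
  refine ⟨⟨m - 1 - i, by omega⟩, ?_⟩
  have := HT_flip (gN_comm (m := m)) gN_braid (i := m - 1 - i) (j := i) (k := m) (by omega) le_rfl
  rw [gN_coe] at this
  rw [D, this, ← gN_coe]

theorem g_D (i : Fin m) : ∃ j : Fin m, g i * D m = D m * g j := by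
  refine ⟨⟨m - 1 - i, by omega⟩, ?_⟩
  have := HT_flip (gN_comm (m := m)) gN_braid (i := i) (j := m - 1 - i) (k := m) (by omega) le_rfl
  rw [gN_coe] at this
  rw [D, ← this, ← gN_coe]

theorem D_mul (x : BM m) : ∃ y, D m * x = y * D m := by
  induction x using ind with
  | one => exact ⟨1, by simp⟩
  | mul i x ih =>
    obtain ⟨y, hy⟩ := ih
    obtain ⟨j, hj⟩ := D_g i
    exact ⟨g j * y, by rw [← mul_assoc, hj, mul_assoc, hy, mul_assoc]⟩

theorem mul_D (x : BM m) : ∃ y, x * D m = D m * y := by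
  induction x using ind with
  | one => exact ⟨1, by simp⟩
  | mul i x ih =>
    obtain ⟨y, hy⟩ := ih
    obtain ⟨j, hj⟩ := g_D i
    exact ⟨g j * y, by rw [mul_assoc, hy, ← mul_assoc, hj, mul_assoc]⟩

theorem mul_D_pow (x : BM m) (k : ℕ) : ∃ y, x * D m ^ k = D m ^ k * y := by
  induction k generalizing x with
  | zero => exact ⟨x, by simp⟩
  | succ k ih =>
    obtain ⟨y, hy⟩ := mul_D x
    obtain ⟨z, hz⟩ := ih y
    exact ⟨z, by rw [pow_succ', ← mul_assoc, hy, mul_assoc, hz, mul_assoc]⟩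

theorem g_dvd_D (i : Fin m) : g i ∣ D m := by
  have := dvd_HT (gN_comm (m := m)) gN_braid (fun _ _ _ => mul_right_cancel') i.2 le_rfl
  rwa [gN_coe] at this

theorem dvd_D_pow (x : BM m) : x ∣ D m ^ len x := by
  induction x using ind with
  | one => simp
  | mul i x ih =>
    obtain ⟨c, hc⟩ := ih
    obtain ⟨d, hd⟩ := g_dvd_D i
    obtain ⟨e, he⟩ := mul_D_pow d (len x)
    refine ⟨c * e, ?_⟩
    rw [len_mul, len_g, add_comm, pow_succ']
    nth_rw 1 [hd]
    rw [mul_assoc, he, hc]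
    simp only [mul_assoc]

theorem exists_common (x y : BM m) : ∃ z, x ∣ z ∧ y ∣ z :=
  ⟨D m ^ (len x + len y), (dvd_D_pow x).trans (pow_dvd_pow _ (Nat.le_add_right _ _)),
    (dvd_D_pow y).trans (pow_dvd_pow _ (Nat.le_add_left _ _))⟩

/-- Right lcms exist: `x M ∩ y M = u M`. -/
theorem exists_lcm (x y : BM m) : ∃ u, ∀ w, (x ∣ w ∧ y ∣ w) ↔ u ∣ w := by
  obtain ⟨z, hx, hy⟩ := exists_common x y
  exact exists_lcm_of_dvd _ x y z le_rfl hx hy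

theorem exists_eq_mul_iff_rev (x w : BM m) : (∃ c, w = c * x) ↔ rev x ∣ rev w := by
  constructor
  · rintro ⟨c, rfl⟩
    exact ⟨rev c, rev_mul _ _⟩
  · rintro ⟨c, h⟩
    exact ⟨rev c, by simpa using congrArg rev h⟩

/-- Left lcms exist: `M x ∩ M y = M u`. -/
theorem exists_left_lcm (x y : BM m) :
    ∃ u, ∀ w, ((∃ c, w = c * x) ∧ ∃ c, w = c * y) ↔ ∃ c, w = c * u := by
  obtain ⟨u, hu⟩ := exists_lcm (rev x) (rev y)
  refine ⟨rev u, fun w => ?_⟩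
  rw [exists_eq_mul_iff_rev, exists_eq_mul_iff_rev, exists_eq_mul_iff_rev, hu, rev_rev]

theorem exists_left_common (x y : BM m) : ∃ a b : BM m, a * x = b * y := by
  obtain ⟨u, hu⟩ := exists_left_lcm x y
  obtain ⟨⟨a, ha⟩, ⟨b, hb⟩⟩ := (hu u).2 ⟨1, by simp⟩
  exact ⟨a, b, ha.symm.trans hb⟩

/-! ### The braid monoid embeds in the braid group -/

/-- The braid monoid satisfies the Ore condition, so it has a group of left fractions. -/
noncomputable instance oreSet : OreLocalization.OreSet (⊤ : Submonoid (BM m)) where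
  ore_right_cancel r₁ r₂ s h := ⟨1, by rw [mul_right_cancel' h]⟩
  oreNum r s := (exists_left_common r (s : BM m)).choose_spec.choose
  oreDenom r s := ⟨(exists_left_common r (s : BM m)).choose, trivial⟩
  ore_eq r s := (exists_left_common r (s : BM m)).choose_spec.choose_spec

/-- The canonical map from the braid monoid to the units of its Ore localization. -/
noncomputable def toFrac (m : ℕ) :
    BM m →* (OreLocalization (⊤ : Submonoid (BM m)) (BM m))ˣ where
  toFun x := OreLocalization.numeratorUnit ⟨x, trivial⟩
  map_one' := Units.ext (map_one OreLocalization.numeratorHom)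
  map_mul' x y := Units.ext (map_mul OreLocalization.numeratorHom x y)

theorem toFrac_injective : Function.Injective (toFrac m) := by
  intro x y h
  have h1 : (OreLocalization.oreDiv x 1 : OreLocalization (⊤ : Submonoid (BM m)) (BM m)) =
      OreLocalization.oreDiv y 1 := congrArg Units.val h
  rw [OreLocalization.oreDiv_eq_iff] at h1
  obtain ⟨u, v, h2, h3⟩ := h1
  have h4 : (u : BM m) = v := by simpa using h3
  have h5 : (u : BM m) * y = v * x := h2
  rw [h4] at h5
  exact (mul_left_cancel' h5).symm

end BM

section Embedding

variable {n : ℕ}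

theorem σ_comm {i j : Fin (n - 1)} (hne : i ≠ j) (h : ¬ Adj i j) :
    (σ i : B n) * σ j = σ j * σ i := by
  have key : ∀ i j : Fin (n - 1), (i : ℕ) + 1 < j → (σ i : B n) * σ j = σ j * σ i := by
    intro i j hij
    have : (σ i * σ j * (σ i)⁻¹ * (σ j)⁻¹ : B n) = 1 :=
      PresentedGroup.one_of_mem (rels := braidRels (n - 1)) (Or.inl ⟨i, j, hij, rfl⟩)
    rw [mul_inv_eq_one, mul_inv_eq_iff_eq_mul] at this
    exact this
  have hne' : (i : ℕ) ≠ j := fun h => hne (Fin.ext h)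
  unfold Adj at h
  rcases lt_or_gt_of_ne hne' with h1 | h1
  · exact key i j (by omega)
  · exact (key j i (by omega)).symm

theorem σ_braid {i j : Fin (n - 1)} (h : Adj i j) :
    (σ i : B n) * (σ j * σ i) = σ j * (σ i * σ j) := by
  have key : ∀ i j : Fin (n - 1), (i : ℕ) + 1 = j →
      (σ i : B n) * (σ j * σ i) = σ j * (σ i * σ j) := by
    intro i j hij
    have : (σ i * σ j * σ i * (σ j)⁻¹ * (σ i)⁻¹ * (σ j)⁻¹ : B n) = 1 :=
      PresentedGroup.one_of_mem (rels := braidRels (n - 1)) (Or.inr ⟨i, j, hij, rfl⟩)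
    rw [mul_inv_eq_one, mul_inv_eq_iff_eq_mul, mul_inv_eq_iff_eq_mul] at this
    simpa only [mul_assoc] using this
  rcases h with h | h
  · exact key i j h
  · exact (key j i h).symm

/-- The canonical homomorphism from the braid monoid to the braid group. -/
def ι (n : ℕ) : BM (n - 1) →* B n :=
  PresentedMonoid.lift (fun i => σ i) (by
    rintro a b (⟨i, j, hne, h⟩ | ⟨i, j, h⟩)
    · simpa using σ_comm hne h
    · simpa using σ_braid h)

@[simp] theorem ι_g (i : Fin (n - 1)) : ι n (BM.g i) = σ i := rfl

/-- The homomorphism from the braid group to the group of fractions of the braid monoid. -/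
noncomputable def groupToFrac (n : ℕ) :
    B n →* (OreLocalization (⊤ : Submonoid (BM (n - 1))) (BM (n - 1)))ˣ :=
  PresentedGroup.toGroup (f := fun i => BM.toFrac (n - 1) (BM.g i)) (by
    rintro r (⟨i, j, h, rfl⟩ | ⟨i, j, h, rfl⟩)
    · have := BM.comm (i := i) (j := j) (by rintro rfl; omega) (by unfold Adj; omega) 1
      have := congrArg (BM.toFrac (n - 1)) this
      simp only [mul_one, map_mul] at this
      simp only [map_mul, map_inv, FreeGroup.lift_apply_of]
      rw [mul_inv_eq_one, mul_inv_eq_iff_eq_mul, this]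
    · have := BM.braid (i := i) (j := j) (Or.inl h) 1
      have := congrArg (BM.toFrac (n - 1)) this
      simp only [mul_one, map_mul] at this
      simp only [map_mul, map_inv, FreeGroup.lift_apply_of]
      rw [mul_inv_eq_one, mul_inv_eq_iff_eq_mul, mul_inv_eq_iff_eq_mul]
      simpa only [mul_assoc] using this)

theorem groupToFrac_ι (x : BM (n - 1)) : groupToFrac n (ι n x) = BM.toFrac (n - 1) x := by
  induction x using BM.ind with
  | one => simp
  | mul i x ih =>
    rw [map_mul, map_mul, map_mul, ih, ι_g]
    congr 1
    exact PresentedGroup.toGroup.of _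

theorem ι_injective : Function.Injective (ι n) := by
  intro x y h
  apply BM.toFrac_injective
  rw [← groupToFrac_ι, ← groupToFrac_ι, h]

theorem mem_P_iff (y : B n) : y ∈ P n ↔ ∃ x, ι n x = y := by
  constructor
  · intro h
    induction h using Submonoid.closure_induction with
    | mem y hy =>
      obtain ⟨i, rfl⟩ := hy
      exact ⟨BM.g i, rfl⟩
    | one => exact ⟨1, map_one _⟩
    | mul x y _ _ hx hy =>
      obtain ⟨x', rfl⟩ := hx
      obtain ⟨y', rfl⟩ := hy
      exact ⟨x' * y', map_mul _ _ _⟩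
  · rintro ⟨x, rfl⟩
    induction x using BM.ind with
    | one => rw [map_one]; exact one_mem _
    | mul i x ih =>
      rw [map_mul, ι_g]
      exact mul_mem (Submonoid.subset_closure ⟨i, rfl⟩) ih

theorem ι_mem (x : BM (n - 1)) : ι n x ∈ P n := (mem_P_iff _).2 ⟨x, rfl⟩

theorem ι_D : ι n (BM.D (n - 1)) = Δ n := by
  have h : ∀ j, ι n (BM.gN (n - 1) j) = σ' j := by
    intro j
    unfold BM.gN σ'
    split_ifs
    · rfl
    · exact map_one _
  simp only [BM.D, HT, Δ, DD, map_list_prod, List.map_map]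
  congr 1
  refine List.map_congr_left fun k _ => ?_
  simp only [Function.comp, map_list_prod, List.map_map]
  congr 1
  exact List.map_congr_left fun j _ => h j

theorem Δ_mem : Δ n ∈ P n := ι_D (n := n) ▸ ι_mem _

theorem Δ_conj_mem (y : B n) : Δ n * y * (Δ n)⁻¹ ∈ P n ↔ y ∈ P n := by
  constructor
  · intro h
    obtain ⟨x, hx⟩ := (mem_P_iff _).1 h
    obtain ⟨z, hz⟩ := BM.mul_D x
    have := congrArg (ι n) hz
    rw [map_mul, map_mul, ι_D, hx, inv_mul_cancel_right, mul_right_inj] at this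
    exact this ▸ ι_mem z
  · intro h
    obtain ⟨x, rfl⟩ := (mem_P_iff _).1 h
    obtain ⟨z, hz⟩ := BM.D_mul x
    have := congrArg (ι n) hz
    rw [map_mul, map_mul, ι_D] at this
    rw [this, mul_inv_cancel_right]
    exact ι_mem z

theorem inv_mul_mem_iff (x w : BM (n - 1)) : (ι n x)⁻¹ * ι n w ∈ P n ↔ x ∣ w := by
  rw [mem_P_iff]
  constructor
  · rintro ⟨c, hc⟩
    exact ⟨c, ι_injective (by rw [map_mul, hc, mul_inv_cancel_left])⟩
  · rintro ⟨c, rfl⟩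
    exact ⟨c, by rw [map_mul, inv_mul_cancel_left]⟩

theorem mul_inv_mem_iff (x w : BM (n - 1)) :
    ι n w * (ι n x)⁻¹ ∈ P n ↔ ∃ c, w = c * x := by
  rw [mem_P_iff]
  constructor
  · rintro ⟨c, hc⟩
    exact ⟨c, ι_injective (by rw [map_mul, hc, inv_mul_cancel_right])⟩
  · rintro ⟨c, rfl⟩
    exact ⟨c, by rw [map_mul, mul_inv_cancel_right]⟩

end Embedding

/-! ### Normal forms in a Garside group -/

/-- The data of a group with a Garside structure that the analysis of left normal forms uses:
a positive cone `Q`, normalized by an element `D` of `Q`, such that `Q ∩ c⁻¹ Q` is a principal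
right ideal `u Q` as soon as it is nonempty. -/
structure LeftGarside {G : Type*} [Group G] (Q : Submonoid G) (D : G) : Prop where
  D_mem : D ∈ Q
  conj_mem : ∀ y, D * y * D⁻¹ ∈ Q ↔ y ∈ Q
  lcm : ∀ c w, w ∈ Q → c * w ∈ Q → ∃ u, ∀ z, (z ∈ Q ∧ c * z ∈ Q) ↔ u⁻¹ * z ∈ Q

namespace LeftGarside

variable {G : Type*} [Group G] {Q : Submonoid G} {D : G}

theorem pow_conj_mem (H : LeftGarside Q D) (k : ℕ) (y : G) :
    D ^ k * y * (D ^ k)⁻¹ ∈ Q ↔ y ∈ Q := by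
  induction k generalizing y with
  | zero => simp
  | succ k ih =>
    rw [← ih y, ← H.conj_mem (D ^ k * y * (D ^ k)⁻¹), pow_succ']
    simp only [mul_inv_rev, mul_assoc]

theorem pow_swap (H : LeftGarside Q D) (k : ℕ) (y : G) : D ^ k * y ∈ Q ↔ y * D ^ k ∈ Q := by
  rw [← H.pow_conj_mem k (y * D ^ k), ← mul_assoc, mul_inv_cancel_right]

/-- Left weightedness of a pair: every simple prefix of `x * y` is a prefix of `x`. -/
def Weighted (Q : Submonoid G) (D x y : G) : Prop :=
  ∀ u, u ∈ Q → u⁻¹ * D ∈ Q → u⁻¹ * (x * y) ∈ Q → u⁻¹ * x ∈ Q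

/-- The first factor of a left weighted product is its meet with `D`, tested against arbitrary
group elements `c⁻¹`. -/
theorem head_mem (H : LeftGarside Q D) (L : List G) (hL : ∀ x ∈ L, x ∈ Q)
    (hW : L.IsChain (Weighted Q D)) (c : G) (h1 : c * L.prod ∈ Q) (h2 : c * D ∈ Q) :
    c * L.headD 1 ∈ Q := by
  induction L generalizing c with
  | nil => simpa using h1
  | cons x L ih =>
    cases L with
    | nil => simpa using h1
    | cons y L =>
      have hx : x ∈ Q := hL x (by simp)
      have hy : y ∈ Q := hL y (by simp)
      rw [List.isChain_cons_cons] at hW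
      have h3 : c * x * y ∈ Q := by
        refine ih (fun z hz => hL z (by simp [hz])) hW.2 (c * x) ?_ ?_
        · simpa [mul_assoc] using h1
        · have : D⁻¹ * x * D ∈ Q := by
            rw [← H.conj_mem]
            simpa [mul_assoc] using hx
          have := Q.mul_mem h2 this
          simpa [mul_assoc] using this
      rw [mul_assoc] at h3
      -- `u` is the join of `1` and `c⁻¹`; it is simple since both lie below `D`.
      obtain ⟨u, hu⟩ := H.lcm c D H.D_mem h2
      obtain ⟨hu1, hu2⟩ := (hu u).2 (by simp)
      have h4 := hW.1 u hu1 ((hu D).1 ⟨H.D_mem, h2⟩) ((hu _).1 ⟨Q.mul_mem hx hy, h3⟩)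
      have := Q.mul_mem hu2 h4
      simpa [mul_assoc] using this

/-- The first `j` factors of a left normal form multiply to the meet of the product with `D ^ j`. -/
theorem take_mem (H : LeftGarside Q D) (j : ℕ) (L : List G) (hL : ∀ x ∈ L, x ∈ Q)
    (hW : L.IsChain (Weighted Q D)) (c : G) (h1 : c * L.prod ∈ Q) (h2 : c * D ^ j ∈ Q) :
    c * (L.take j).prod ∈ Q := by
  induction j generalizing L c with
  | zero => simpa using h2
  | succ j ih =>
    cases L with
    | nil => simpa using h1
    | cons x L =>
      have h3 : D ^ j * c * x ∈ Q := by
        refine H.head_mem (x :: L) hL hW (D ^ j * c) ?_ ?_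
        · rw [mul_assoc]
          exact Q.mul_mem (Q.pow_mem H.D_mem j) h1
        · rw [mul_assoc, H.pow_swap, mul_assoc, ← pow_succ']
          exact h2
      rw [mul_assoc, H.pow_swap] at h3
      have := ih L (fun z hz => hL z (by simp [hz])) hW.tail (c * x)
        (by simpa [mul_assoc] using h1) h3
      simpa [mul_assoc] using this

theorem prod_inv_mul_pow_mem (H : LeftGarside Q D) (L : List G) (hL : ∀ x ∈ L, x⁻¹ * D ∈ Q) :
    L.prod⁻¹ * D ^ L.length ∈ Q := by
  induction L with
  | nil => simp
  | cons x L ih =>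
    have h1 := ih (fun z hz => hL z (by simp [hz]))
    have h2 := hL x (by simp)
    have h3 : (D ^ L.length)⁻¹ * (x⁻¹ * D) * D ^ L.length ∈ Q := by
      rw [← H.pow_conj_mem L.length]
      simpa [mul_assoc] using h2
    have := Q.mul_mem h1 h3
    simpa [mul_assoc, pow_succ'] using this

end LeftGarside

/-! ### Normal forms of braids -/

section Braids

variable {n : ℕ}

theorem leftGarside (n : ℕ) : LeftGarside (P n) (Δ n) where
  D_mem := Δ_mem
  conj_mem := Δ_conj_mem
  lcm c w hw hv := by
    obtain ⟨w, rfl⟩ := (mem_P_iff _).1 hw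
    obtain ⟨v, hv⟩ := (mem_P_iff _).1 hv
    obtain ⟨a, b, hab⟩ := BM.exists_left_common v w
    -- Write `c` as a left fraction `a⁻¹ b`.
    have hc : c = (ι n a)⁻¹ * ι n b := by
      have := congrArg (ι n) hab
      rw [map_mul, map_mul, hv, ← mul_assoc] at this
      rw [eq_inv_mul_iff_mul_eq]
      exact mul_right_cancel this
    obtain ⟨l, hl⟩ := BM.exists_lcm b a
    refine ⟨(ι n b)⁻¹ * ι n l, fun z => ?_⟩
    rw [mul_inv_rev, inv_inv, mul_assoc]
    constructor
    · rintro ⟨hz, hcz⟩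
      obtain ⟨z, rfl⟩ := (mem_P_iff _).1 hz
      rw [hc, mul_assoc, ← map_mul, inv_mul_mem_iff] at hcz
      rw [← map_mul, inv_mul_mem_iff, ← hl]
      exact ⟨⟨z, rfl⟩, hcz⟩
    · intro h
      obtain ⟨q, hq⟩ := (mem_P_iff _).1 h
      rw [eq_inv_mul_iff_mul_eq, ← map_mul] at hq
      obtain ⟨h1, h2⟩ := (hl (l * q)).2 ⟨q, rfl⟩
      rw [← inv_mul_mem_iff, hq] at h1 h2
      rw [inv_mul_cancel_left] at h1
      rw [hc, mul_assoc]
      exact ⟨h1, h2⟩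

/-- The mirror image of `leftGarside`, stated in the opposite group. -/
theorem rightGarside (n : ℕ) : LeftGarside (P n).op (MulOpposite.op (Δ n)) where
  D_mem := Δ_mem
  conj_mem y := by
    rw [Submonoid.mem_op, Submonoid.mem_op, ← Δ_conj_mem]
    simp [mul_assoc]
  lcm c w hw hv := by
    rw [Submonoid.mem_op] at hw hv
    obtain ⟨w₁, hw₁⟩ := (mem_P_iff _).1 hw
    obtain ⟨v, hv⟩ := (mem_P_iff _).1 hv
    rw [MulOpposite.unop_mul, ← hw₁] at hv
    obtain ⟨z, ⟨b, hb⟩, ⟨a, ha⟩⟩ := BM.exists_common w₁ v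
    -- Write `c` as a right fraction `b a⁻¹`.
    have hc : c.unop = ι n b * (ι n a)⁻¹ := by
      have := congrArg (ι n) (hb.symm.trans ha)
      rw [map_mul, map_mul, hv, mul_assoc] at this
      rw [eq_mul_inv_iff_mul_eq]
      exact (mul_left_cancel this).symm
    obtain ⟨l, hl⟩ := BM.exists_left_lcm b a
    refine ⟨MulOpposite.op (ι n l * (ι n b)⁻¹), fun z => ?_⟩
    simp only [Submonoid.mem_op, MulOpposite.unop_mul, MulOpposite.unop_inv, MulOpposite.unop_op,
      mul_inv_rev, inv_inv]
    generalize z.unop = z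
    rw [← mul_assoc]
    constructor
    · rintro ⟨hz, hcz⟩
      obtain ⟨z, rfl⟩ := (mem_P_iff _).1 hz
      rw [hc, ← mul_assoc, ← map_mul, mul_inv_mem_iff] at hcz
      rw [← map_mul, mul_inv_mem_iff, ← hl]
      exact ⟨⟨z, rfl⟩, hcz⟩
    · intro h
      obtain ⟨q, hq⟩ := (mem_P_iff _).1 h
      rw [eq_mul_inv_iff_mul_eq, ← map_mul] at hq
      obtain ⟨h1, h2⟩ := (hl (q * l)).2 ⟨q, rfl⟩
      rw [← mul_inv_mem_iff, hq] at h1 h2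
      rw [mul_inv_cancel_right] at h1
      rw [hc, ← mul_assoc]
      exact ⟨h1, h2⟩

theorem Δ_mul_inv_mem (u : B n) : Δ n * u⁻¹ ∈ P n ↔ u⁻¹ * Δ n ∈ P n := by
  simpa using (leftGarside n).pow_swap 1 u⁻¹

theorem IsLeftNF.take_mem {b : B n} {L : List (B n)} (h : IsLeftNF b L) (j : ℕ) (c : B n)
    (h1 : c * b ∈ P n) (h2 : c * Δ n ^ j ∈ P n) : c * (L.take j).prod ∈ P n := by
  obtain ⟨hs, rfl, hw⟩ := h
  refine (leftGarside n).take_mem j L (fun x hx => (hs x hx).1.1) ?_ c h1 h2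
  rw [List.isChain_iff_getElem]
  intro i hi u hu hu' h3
  have := hw i hi u ⟨hu, hu'⟩
  rw [List.getD_eq_getElem _ _ (by omega), List.getD_eq_getElem _ _ hi] at this
  exact this h3

/-- The last `L.length - k` factors of a right normal form multiply to the right meet of the
product with `Δ ^ (L.length - k)`. -/
theorem IsRightNF.drop_mem {a : B n} {L : List (B n)} (h : IsRightNF a L) (k : ℕ) (c : B n)
    (h1 : a * c ∈ P n) (h2 : Δ n ^ (L.length - k) * c ∈ P n) : (L.drop k).prod * c ∈ P n := by
  obtain ⟨hs, rfl, hw⟩ := h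
  have key := (rightGarside n).take_mem (L.length - k) (L.map MulOpposite.op).reverse ?_ ?_
    (MulOpposite.op c) ?_ ?_
  · rw [List.take_reverse, List.length_map, ← List.map_drop, ← MulOpposite.op_list_prod,
      Submonoid.mem_op] at key
    rcases le_total k L.length with hk | hk
    · rw [Nat.sub_sub_self hk] at key
      exact key
    · simp only [List.drop_eq_nil_of_le hk]
      simpa [Nat.sub_eq_zero_of_le hk] using h2
  · intro x hx
    simp only [List.mem_reverse, List.mem_map] at hx
    obtain ⟨y, hy, rfl⟩ := hx
    exact (hs y hy).1.1
  · rw [List.isChain_reverse, List.isChain_map, List.isChain_iff_getElem]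
    intro i hi u hu hu' h3
    have := hw i hi u.unop ⟨hu, (Δ_mul_inv_mem _).1 hu'⟩
    rw [List.getD_eq_getElem _ _ (by omega), List.getD_eq_getElem _ _ hi] at this
    exact this h3
  · rw [← MulOpposite.op_list_prod]
    exact h1
  · exact h2

/-- One half of the dichotomy: if `Δ ^ (r - k)` clears the denominator of `a⁻¹ b`, then the first
`k` right factors of `a` divide the first `k` left factors of `b`. -/
theorem cancel_half {a b : B n} (hb : b ∈ P n) {Ra Lb : List (B n)} (hRa : IsRightNF a Ra)
    (hLb : IsLeftNF b Lb) {k : ℕ} (hk : k ≤ Ra.length)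
    (h : Δ n ^ (Ra.length - k) * (a⁻¹ * b) ∈ P n) :
    ((Ra.take k).prod)⁻¹ * (Lb.take k).prod ∈ P n := by
  have h1 := hRa.drop_mem k (a⁻¹ * b) (by simpa using hb) h
  have h2 : (Ra.drop k).prod * (a⁻¹ * b) = ((Ra.take k).prod)⁻¹ * b := by
    rw [← hRa.2.1, ← List.prod_take_mul_prod_drop Ra k]
    simp only [mul_inv_rev, mul_assoc, mul_inv_cancel_left]
  rw [h2] at h1
  refine hLb.take_mem k _ h1 ?_
  have := (leftGarside n).prod_inv_mul_pow_mem (Ra.take k)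
    (fun x hx => (hRa.1 x (List.mem_of_mem_take hx)).1.2)
  rwa [List.length_take, min_eq_left hk] at this

end Braids

/-- the cancelling lemma for normal forms. -/
theorem cancelling_lemma (n : ℕ)
    (a b : B n) (ha : a ∈ P n) (hb : b ∈ P n)
    (r s k : ℕ)
    (La Ra Lb Rb : List (B n))
    (hLa : IsLeftNF a La) (hLa_len : La.length = r)
    (hRa : IsRightNF a Ra) (hRa_len : Ra.length = r)
    (hLb : IsLeftNF b Lb) (hLb_len : Lb.length = s)
    (hRb : IsRightNF b Rb) (hRb_len : Rb.length = s)
    (hk : 1 ≤ k) (hkr : k ≤ r) (hks : k ≤ s)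
    (hlen : lenLE (a⁻¹ * b) (r + s - 2 * k + 1)) :
    ((Ra.take k).prod)⁻¹ * (Lb.take k).prod ∈ P n ∨
    ((Rb.take k).prod)⁻¹ * (La.take k).prod ∈ P n := by
  subst hRa_len hRb_len
  obtain ⟨p, hp1, hp2⟩ := hlen
  by_cases hp : -p ≤ ((Ra.length - k : ℕ) : ℤ)
  · left
    refine cancel_half hb hRa hLb hkr ?_
    obtain ⟨q, hq⟩ := Int.le.dest hp
    rw [← zpow_natCast, ← hq, add_comm, zpow_add, zpow_natCast, mul_assoc]
    exact mul_mem (pow_mem Δ_mem q) hp1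
  · right
    refine cancel_half ha hRb hLa hks ?_
    rw [(leftGarside n).pow_swap]
    -- The exponent of the upper bound is at most `s - k`.
    have hle : p + ((Ra.length + Rb.length - 2 * k + 1 : ℕ) : ℤ) ≤ ((Rb.length - k : ℕ) : ℤ) := by
      omega
    obtain ⟨q, hq⟩ := Int.le.dest hle
    rw [← zpow_natCast, ← hq, zpow_add, zpow_natCast, ← mul_assoc]
    rw [mul_inv_rev, inv_inv] at hp2
    exact mul_mem hp2 (pow_mem Δ_mem q)
end
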